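/- Let M ∈ ℚ_+^{n×m} be nonzero and column-stochastic, and let ℳ be the LMC constructed from M. Let d ∈ ℕ and let ℳ' be any LMC with d+2 states over the same alphabet such that there exists a row-stochastic matrix A with A·B_{ℳ'} = B_ℳ. Then there exist nonnegative matrices W ∈ ℝ_+^{n×d} and H ∈ ℝ_+^{d×m} with M = W·H; moreover, if rk(ℳ') = rk(ℳ), then rank(W) = rank(M). -/

import Mathlib

open Matrix

/-- `μ` is (the transition function of) a labelled Markov chain: all entries lie in
`[0,1]` and `∑_{σ ∈ Σ} μ(σ)` is row-stochastic. -/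
def IsLMC {A S : Type} [Fintype A] [Fintype S] (μ : A → Matrix S S ℝ) : Prop :=
  (∀ a i j, 0 ≤ μ a i j) ∧ (∀ a i j, μ a i j ≤ 1) ∧ (∀ i, ∑ a, ∑ j, μ a i j = 1)

/-- Transition matrix of a labelled Markov chain extended to words:
`μ(σ₁…σ_k) = μ(σ₁) ⋯ μ(σ_k)`, with `μ(ε) = I`. -/
noncomputable def lmcWord {A S : Type} [Fintype S] [DecidableEq S]
    (μ : A → Matrix S S ℝ) (w : List A) : Matrix S S ℝ :=
  (w.map μ).prod

/-- Entry of the backward matrix: `(B_ℳ)_{i,w} = e_i^⊤ μ(w) 𝟙`. -/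
noncomputable def lmcB {A S : Type} [Fintype S] [DecidableEq S]
    (μ : A → Matrix S S ℝ) (i : S) (w : List A) : ℝ :=
  ∑ j, lmcWord μ w i j

/-- The rank of an LMC: the dimension of the span of the columns of its backward matrix. -/
noncomputable def lmcRank {A S : Type} [Fintype S] [DecidableEq S]
    (μ : A → Matrix S S ℝ) : ℕ :=
  Module.finrank ℝ
    (Submodule.span ℝ (Set.range fun w : List A => fun i : S => lmcB μ i w))

/-- `ℳ'` (with transitions `μ'`) covers `ℳ` (with transitions `μ`) iff there is a
row-stochastic matrix `C` with `C · B_{ℳ'} = B_ℳ`. -/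
def lmcCovers {A S S' : Type} [Fintype S] [DecidableEq S] [Fintype S'] [DecidableEq S']
    (μ' : A → Matrix S' S' ℝ) (μ : A → Matrix S S ℝ) : Prop :=
  ∃ C : S → S' → ℝ, (∀ i l, 0 ≤ C i l) ∧ (∀ i, ∑ l, C i l = 1) ∧
    ∀ i (w : List A), ∑ l, C i l * lmcB μ' l w = lmcB μ i w

/-- The LMC constructed from a column-stochastic matrix `M ∈ ℝ_+^{n×m}`:
`μ(a_i)_{0,i} = 1/m`, `μ(b_j)_{i,m+1} = M_{j,i}`, `μ(✓)_{m+1,m+1} = 1`, otherwise `0`. -/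
noncomputable def lmcMu {n m : ℕ} (M : Matrix (Fin n) (Fin m) ℝ) :
    (Fin m ⊕ Fin n ⊕ Unit) →
      Matrix (Unit ⊕ Fin m ⊕ Unit) (Unit ⊕ Fin m ⊕ Unit) ℝ
  | Sum.inl i => Matrix.of fun p q =>
      match p, q with
      | Sum.inl _, Sum.inr (Sum.inl i') => if i' = i then 1 / (m : ℝ) else 0
      | _, _ => 0
  | Sum.inr (Sum.inl j) => Matrix.of fun p q =>
      match p, q with
      | Sum.inr (Sum.inl i), Sum.inr (Sum.inr _) => M j i
      | _, _ => 0
  | Sum.inr (Sum.inr _) => Matrix.of fun p q =>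
      match p, q with
      | Sum.inr (Sum.inr _), Sum.inr (Sum.inr _) => 1
      | _, _ => 0

theorem lmcB_nil' {A S : Type} [Fintype S] [DecidableEq S]
    (μ : A → Matrix S S ℝ) (i : S) : lmcB μ i [] = 1 := by
  simp [lmcB, lmcWord, Matrix.one_apply]

theorem lmcB_cons' {A S : Type} [Fintype S] [DecidableEq S]
    (μ : A → Matrix S S ℝ) (i : S) (a : A) (w : List A) :
    lmcB μ i (a :: w) = ∑ k, μ a i k * lmcB μ k w := by
  simp only [lmcB, lmcWord, List.map_cons, List.prod_cons, Matrix.mul_apply, Finset.mul_sum]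
  exact Finset.sum_comm

theorem lmcB_single' {A S : Type} [Fintype S] [DecidableEq S]
    (μ : A → Matrix S S ℝ) (i : S) (a : A) :
    lmcB μ i [a] = ∑ k, μ a i k := by
  simp [lmcB_cons', lmcB_nil']

/-- embedding of middle vectors -/
noncomputable def midEmb (m : ℕ) : (Fin m → ℝ) →ₗ[ℝ] (Unit ⊕ Fin m ⊕ Unit → ℝ) where
  toFun v := Sum.elim (fun _ => 0) (Sum.elim v (fun _ => 0))
  map_add' x y := by ext (_ | _ | _) <;> simp
  map_smul' c x := by ext (_ | _ | _) <;> simp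

theorem rank_upper {n m : ℕ} (M : Matrix (Fin n) (Fin m) ℝ)
    (hM : ∀ i : Fin m, ∑ j, M j i = 1) : lmcRank (lmcMu M) ≤ M.rank + 2 := by
  classical
  let e0 : Unit ⊕ Fin m ⊕ Unit → ℝ := Sum.elim (fun _ => 1) (fun _ => 0)
  let e1 : Unit ⊕ Fin m ⊕ Unit → ℝ := Sum.elim (fun _ => 0) (Sum.elim (fun _ => 0) (fun _ => 1))
  let R : Submodule ℝ (Fin m → ℝ) := Submodule.span ℝ (Set.range M.row)
  let T := (Submodule.span ℝ {e0} ⊔ Submodule.span ℝ {e1}) ⊔ R.map (midEmb m)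
  have h0 : e0 ∈ T := (le_sup_left.trans le_sup_left : _ ≤ T) (Submodule.mem_span_singleton_self e0)
  have h1 : e1 ∈ T := (le_sup_right.trans le_sup_left : _ ≤ T) (Submodule.mem_span_singleton_self e1)
  have hr : ∀ j, midEmb m (M j) ∈ T := fun j =>
    (le_sup_right : _ ≤ T) (Submodule.mem_map_of_mem (Submodule.subset_span ⟨j, rfl⟩))
  have hle : Submodule.span ℝ (Set.range fun w : List (Fin m ⊕ Fin n ⊕ Unit) =>
      fun i => lmcB (lmcMu M) i w) ≤ T := by
    rw [Submodule.span_le]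
    rintro _ ⟨w, rfl⟩
    rcases w with _ | ⟨(i | j | _), w⟩
    · have : (fun i => lmcB (lmcMu M) i []) = e0 + e1 + ∑ j, midEmb m (M j) := by
        ext (_ | i | _) <;> simp [lmcB_nil', e0, e1, midEmb, hM]
      simp only [this]
      exact T.add_mem (T.add_mem h0 h1) (T.sum_mem fun j _ => hr j)
    · have : (fun p => lmcB (lmcMu M) p (Sum.inl i :: w)) =
          (1 / (m : ℝ) * lmcB (lmcMu M) (Sum.inr (Sum.inl i)) w) • e0 := by
        ext (_ | i | _) <;> simp [lmcB_cons', e0, lmcMu]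
      simp only [this]
      exact T.smul_mem _ h0
    · have : (fun p => lmcB (lmcMu M) p (Sum.inr (Sum.inl j) :: w)) =
          (lmcB (lmcMu M) (Sum.inr (Sum.inr ())) w) • midEmb m (M j) := by
        ext (_ | i | _) <;> simp [lmcB_cons', midEmb, lmcMu, mul_comm]
      simp only [this]
      exact T.smul_mem _ (hr j)
    · have : (fun p => lmcB (lmcMu M) p (Sum.inr (Sum.inr ()) :: w)) =
          (lmcB (lmcMu M) (Sum.inr (Sum.inr ())) w) • e1 := by
        ext (_ | i | _) <;> simp [lmcB_cons', e1, lmcMu]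
      simp only [this]
      exact T.smul_mem _ h1
  have hR : Module.finrank ℝ R = M.rank := (Matrix.rank_eq_finrank_span_row M).symm
  have a1 := Submodule.finrank_mono hle
  have a2 : Module.finrank ℝ T ≤ _ := Submodule.finrank_add_le_finrank_add_finrank
    (Submodule.span ℝ {e0} ⊔ Submodule.span ℝ {e1}) (R.map (midEmb m))
  have a3 := Submodule.finrank_add_le_finrank_add_finrank
    (Submodule.span ℝ {e0}) (Submodule.span ℝ {e1})
  have a4 := Submodule.finrank_map_le (midEmb m) R
  have a5 : Module.finrank ℝ (Submodule.span ℝ {e0}) ≤ 1 := by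
    simpa using finrank_span_le_card (R := ℝ) {e0}
  have a6 : Module.finrank ℝ (Submodule.span ℝ {e1}) ≤ 1 := by
    simpa using finrank_span_le_card (R := ℝ) {e1}
  unfold lmcRank
  omega

theorem dim_lower {N d n : ℕ} (S : Submodule ℝ (Fin N → ℝ)) (t u : Fin N) (f : Fin d → Fin N)
    (x y : Fin N → ℝ) (hx : x ∈ S) (hy : y ∈ S) (hxt : x t = 1) (hxu : x u = 0)
    (hyt : y t = 0) (hyu : y u = 1) (b : Fin n → Fin N → ℝ) (hb : ∀ j, b j ∈ S)
    (hbt : ∀ j, b j t = 0) (hbu : ∀ j, b j u = 0) :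
    (Matrix.of fun j l => b j (f l)).rank + 2 ≤ Module.finrank ℝ S := by
  let R := Submodule.span ℝ (Set.range b)
  have hRS : R ≤ S := by
    rw [Submodule.span_le]; rintro _ ⟨j, rfl⟩; exact hb j
  have c1 : (Matrix.of fun j l => b j (f l)).rank ≤ Module.finrank ℝ R := by
    rw [Matrix.rank_eq_finrank_span_row]
    refine le_trans (le_of_eq ?_) (Submodule.finrank_map_le (LinearMap.funLeft ℝ ℝ f) R)
    rw [Submodule.map_span, ← Set.range_comp]
    rfl
  let P : (Fin N → ℝ) →ₗ[ℝ] ℝ × ℝ := (LinearMap.proj t).prod (LinearMap.proj u)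
  let g : S →ₗ[ℝ] ℝ × ℝ := P.domRestrict S
  have hg : Function.Surjective g := by
    rintro ⟨p, q⟩
    refine ⟨⟨p • x + q • y, S.add_mem (S.smul_mem _ hx) (S.smul_mem _ hy)⟩, ?_⟩
    simp [g, P, hxt, hxu, hyt, hyu]
  have c2 := LinearMap.finrank_range_add_finrank_ker g
  rw [LinearMap.range_eq_top.2 hg, finrank_top] at c2
  have hRP : R ≤ LinearMap.ker P := by
    rw [Submodule.span_le]; rintro _ ⟨j, rfl⟩; simp [P, hbt, hbu]
  have hker : R.comap S.subtype ≤ LinearMap.ker g := by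
    intro v hv
    exact hRP hv
  have c3 := Submodule.finrank_mono hker
  rw [(Submodule.comapSubtypeEquivOfLe hRS).finrank_eq] at c3
  simp at c2
  omega

/-- Let `M ∈ ℚ_+^{n×m}` be nonzero and column-stochastic and `ℳ` the LMC constructed
from it. Any LMC `ℳ'` with `d+2` states over the same alphabet covering `ℳ`
determines a `d`-dimensional NMF `M = W · H`; moreover if `rk(ℳ') = rk(ℳ)` then
`rank(W) = rank(M)`. -/
theorem stmt7 {n m : ℕ} (d : ℕ) (hd : 0 < d)
    (M : Matrix (Fin n) (Fin m) ℚ)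
    (hMnn : ∀ j i, 0 ≤ M j i) (hMne : M ≠ 0) (hMcs : ∀ i : Fin m, ∑ j, M j i = 1)
    (μ' : (Fin m ⊕ Fin n ⊕ Unit) → Matrix (Fin (d + 2)) (Fin (d + 2)) ℝ)
    (hμ' : IsLMC μ')
    (hcov : lmcCovers μ' (lmcMu (M.map ((↑) : ℚ → ℝ)))) :
    ∃ W : Matrix (Fin n) (Fin d) ℝ, ∃ H : Matrix (Fin d) (Fin m) ℝ,
      (∀ j l, 0 ≤ W j l) ∧ (∀ l i, 0 ≤ H l i) ∧
      M.map ((↑) : ℚ → ℝ) = W * H ∧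
      (lmcRank μ' = lmcRank (lmcMu (M.map ((↑) : ℚ → ℝ))) →
        W.rank = (M.map ((↑) : ℚ → ℝ)).rank) := by
  classical
  obtain ⟨C, hC0, hC1, hC⟩ := hcov
  obtain ⟨hμ0, -, hμ1⟩ := hμ'
  set r : Fin (d + 2) → (Fin m ⊕ Fin n ⊕ Unit) → ℝ := fun l a => ∑ j, μ' a l j with hr
  have hrB : ∀ l a, lmcB μ' l [a] = r l a := fun l a => lmcB_single' _ _ _
  have hr0 : ∀ l a, 0 ≤ r l a := fun l a => Finset.sum_nonneg fun j _ => hμ0 a l j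
  have hr1 : ∀ l, (∑ i, r l (Sum.inl i)) + ((∑ j, r l (Sum.inr (Sum.inl j))) +
      r l (Sum.inr (Sum.inr ()))) = 1 := fun l => by
    have := hμ1 l
    simpa [Fintype.sum_sum_type] using this
  have hCr : ∀ i a, ∑ l, C i l * r l a = ∑ k, lmcMu (M.map ((↑) : ℚ → ℝ)) a i k := fun i a => by
    rw [← lmcB_single', ← hC]; simp only [hrB]
  have hsup : ∀ i, ∃ l, C i l ≠ 0 := fun i => by
    by_contra! h
    have := hC1 i
    simp [h] at this
  have ha0 : ∀ l, 0 ≤ ∑ i, r l (Sum.inl i) := fun l => Finset.sum_nonneg fun _ _ => hr0 _ _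
  have hb0 : ∀ l, 0 ≤ ∑ j, r l (Sum.inr (Sum.inl j)) := fun l =>
    Finset.sum_nonneg fun _ _ => hr0 _ _
  obtain ⟨t, ht⟩ := hsup (Sum.inr (Sum.inr ()))
  obtain ⟨u, hu⟩ := hsup (Sum.inl ())
  have ht1 : r t (Sum.inr (Sum.inr ())) = 1 := by
    have h := hCr (Sum.inr (Sum.inr ())) (Sum.inr (Sum.inr ()))
    have h' : ∑ l, C (Sum.inr (Sum.inr ())) l * (1 - r l (Sum.inr (Sum.inr ()))) = 0 := by
      simp only [mul_sub, mul_one, Finset.sum_sub_distrib, h, hC1]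
      simp [lmcMu]
    rw [Finset.sum_eq_zero_iff_of_nonneg] at h'
    · have := h' t (Finset.mem_univ _)
      rcases mul_eq_zero.1 this with h | h
      · exact absurd h ht
      · linarith
    · intro l _
      have := hr1 l
      exact mul_nonneg (hC0 _ _) (by linarith [ha0 l, hb0 l])
  have hu0 : ∀ s, r u (Sum.inr s) = 0 := fun s => by
    have h := hCr (Sum.inl ()) (Sum.inr s)
    have h2 : ∑ k, lmcMu (M.map ((↑) : ℚ → ℝ)) (Sum.inr s) (Sum.inl ()) k = 0 := by
      rcases s with j | _ <;> simp [lmcMu]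
    rw [h2, Finset.sum_eq_zero_iff_of_nonneg (fun l _ => mul_nonneg (hC0 _ _) (hr0 _ _))] at h
    exact (mul_eq_zero.1 (h u (Finset.mem_univ _))).resolve_left hu
  have hta : ∑ i, r t (Sum.inl i) = 0 := by linarith [hr1 t, ha0 t, hb0 t]
  have htb' : ∑ j, r t (Sum.inr (Sum.inl j)) = 0 := by linarith [hr1 t, ha0 t, hb0 t]
  have htb : ∀ j, r t (Sum.inr (Sum.inl j)) = 0 := fun j =>
    (Finset.sum_eq_zero_iff_of_nonneg (fun _ _ => hr0 _ _)).1 htb' j (Finset.mem_univ _)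
  have hua : ∑ i, r u (Sum.inl i) = 1 := by
    have := hr1 u
    simpa [hu0] using this
  have hut : u ≠ t := by
    rintro rfl
    rw [hu0] at ht1
    exact zero_ne_one ht1
  obtain ⟨u', hu'⟩ := Fin.exists_succAbove_eq hut
  let f : Fin d → Fin (d + 2) := fun k => t.succAbove (u'.succAbove k)
  let b : Fin n → Fin (d + 2) → ℝ := fun j l => r l (Sum.inr (Sum.inl j))
  have hfac : M.map ((↑) : ℚ → ℝ) = (Matrix.of fun j l => b j (f l)) *
      (Matrix.of fun l i => C (Sum.inr (Sum.inl i)) (f l)) := by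
    ext j i
    have h := hCr (Sum.inr (Sum.inl i)) (Sum.inr (Sum.inl j))
    rw [Fin.sum_univ_succAbove _ t, Fin.sum_univ_succAbove _ u', hu', htb, hu0] at h
    simp only [Matrix.mul_apply, Matrix.of_apply, b, f]
    simp only [mul_comm (r _ _)]
    have h2 : ∑ k, lmcMu (M.map ((↑) : ℚ → ℝ)) (Sum.inr (Sum.inl j)) (Sum.inr (Sum.inl i)) k
        = M.map ((↑) : ℚ → ℝ) j i := by
      simp [lmcMu]
    rw [← h2, ← h]
    simp
  refine ⟨Matrix.of fun j l => b j (f l), Matrix.of fun l i => C (Sum.inr (Sum.inl i)) (f l), fun j l => hr0 _ _, fun l i => hC0 _ _, hfac, fun hrk => ?_⟩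
  apply le_antisymm
  · have hup := rank_upper (M.map ((↑) : ℚ → ℝ)) (fun i => by
      have := hMcs i
      simp only [Matrix.map_apply]
      exact_mod_cast this)
    rw [← hrk] at hup
    have hmem : ∀ a, (fun l => r l a) ∈ Submodule.span ℝ
        (Set.range fun w : List (Fin m ⊕ Fin n ⊕ Unit) => fun i => lmcB μ' i w) := fun a =>
      Submodule.subset_span ⟨[a], by ext l; exact hrB l a⟩
    have hlow := dim_lower _ t u f (fun l => r l (Sum.inr (Sum.inr ())))
      (∑ i, fun l => r l (Sum.inl i)) (hmem _) (Submodule.sum_mem _ fun i _ => hmem _)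
      ht1 (hu0 _) (by simpa using hta) (by simpa using hua) b (fun j => hmem _) htb (fun j => hu0 _)
    unfold lmcRank at hup
    omega
  · conv_lhs => rw [hfac]
    exact Matrix.rank_mul_le_left _ _
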